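/- arXiv:1812.08259 — 2 statements merged into one kernel-verified Lean document; each statement's English description precedes it below -/
import Mathlib

section
/- Let G = (V,E) be a finite directed acyclic graph with source s and target t in which every node lies on at least one directed s–t path, and let v ∈ V. Then φ_v(p)/p^{ℓ_v} tends, as p tends to 0 from above, to the number of directed s–t paths through v of length ℓ_v, and this number is positive. -/
open scoped Classical

/-- `PathIn F a b l` means `l` is the list of edges of a directed walk from `a` to `b`
all of whose edges belong to the edge set `F`.  (In a directed acyclic graph every
walk is a path.) -/
inductive PathIn {V : Type*} (F : Finset (V × V)) : V → V → List (V × V) → Prop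
  | nil (a : V) : PathIn F a a []
  | cons {a b c : V} {l : List (V × V)} (hab : (a, b) ∈ F) (h : PathIn F b c l) :
      PathIn F a c ((a, b) :: l)

/-- The directed graph with edge set `E` is acyclic: the only directed path from a
node to itself is the empty one. -/
def Acyclic {V : Type*} (E : Finset (V × V)) : Prop :=
  ∀ (a : V) (l : List (V × V)), PathIn E a a l → l = []

/-- There exists a directed path from `a` to `b` with all edges in `E`. -/
def Reaches {V : Type*} (E : Finset (V × V)) (a b : V) : Prop :=
  ∃ l, PathIn E a b l

/-- `l` is a directed path from `s` to `t` in `E` passing through `v`. -/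
def ThroughPath {V : Type*} (E : Finset (V × V)) (s t v : V) (l : List (V × V)) : Prop :=
  PathIn E s t l ∧ (v = s ∨ v ∈ l.map Prod.snd)

/-- Some directed `s`–`t` path through `v` (in the graph with edge set `E`) has all
its edges in `S`. -/
def ActiveThrough {V : Type*} (E S : Finset (V × V)) (s t v : V) : Prop :=
  ∃ l, ThroughPath E s t v l ∧ ∀ e ∈ l, e ∈ S

/-- The intermediacy `φ_v(p)`: the probability that a random edge subset `S ⊆ E`,
drawn with probability `p^|S| (1-p)^(|E|-|S|)`, contains all edges of some directed
`s`–`t` path through `v`. -/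
noncomputable def intermediacy {V : Type*} [DecidableEq V] (E : Finset (V × V)) (p : ℝ)
    (s t v : V) : ℝ :=
  ∑ S ∈ E.powerset, p ^ S.card * (1 - p) ^ (E.card - S.card) *
    (if ActiveThrough E S s t v then 1 else 0)

/-- `Pr(X_{ab} = 1)`: the probability that a random edge subset `S ⊆ E` contains all
edges of some directed path from `a` to `b`. -/
noncomputable def prReach {V : Type*} [DecidableEq V] (E : Finset (V × V)) (p : ℝ)
    (a b : V) : ℝ :=
  ∑ S ∈ E.powerset, p ^ S.card * (1 - p) ^ (E.card - S.card) *
    (if ∃ l, PathIn E a b l ∧ ∀ e ∈ l, e ∈ S then 1 else 0)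

/-- `ℓ_v`: the length of a shortest directed `s`–`t` path passing through `v`. -/
noncomputable def shortestThrough {V : Type*} (E : Finset (V × V)) (s t v : V) : ℕ :=
  sInf {n | ∃ l, ThroughPath E s t v l ∧ l.length = n}

/-- `σ_v`: the maximum number of pairwise edge-disjoint directed `s`–`t` paths all
passing through `v`. -/
noncomputable def maxDisjointThrough {V : Type*} (E : Finset (V × V)) (s t v : V) : ℕ :=
  sSup {n | ∃ P : Finset (List (V × V)), P.card = n ∧ (∀ l ∈ P, ThroughPath E s t v l) ∧
    ∀ l₁ ∈ P, ∀ l₂ ∈ P, l₁ ≠ l₂ → ∀ e, e ∈ l₁ → e ∉ l₂}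

/-!
In an acyclic graph the edges of a path are strictly ordered by reachability of their tails, so a
path repeats no edge and can be recovered from its edge set. Hence an edge set activating `v` has at
least `ℓ_v` elements, and those with exactly `ℓ_v` elements are the edge sets of the shortest paths
through `v`. Since `φ_v(p)` is the sum of `p^|S| (1 - p)^(|E| - |S|)` over the activating sets `S`,
dividing by `p^ℓ_v` and letting `p → 0` leaves the terms with `|S| = ℓ_v`, each with limit `1`.
-/

open Filter Relation
open scoped Finset Topology

theorem tendsto_sum_pow_mul_div_pow_nhdsNE_zero {ι 𝕜 : Type*} [Field 𝕜] [TopologicalSpace 𝕜]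
    [ContinuousAdd 𝕜] [ContinuousMul 𝕜] {s : Finset ι} {d : ι → ℕ} {f : ι → 𝕜 → 𝕜} {k : ℕ}
    (hd : ∀ i ∈ s, k ≤ d i) (hf : ∀ i ∈ s, ContinuousAt (f i) 0) :
    Tendsto (fun x ↦ (∑ i ∈ s, x ^ d i * f i x) / x ^ k) (𝓝[≠] 0)
      (𝓝 (∑ i ∈ s with d i = k, f i 0)) := by
  have value_at_zero :
      ∑ i ∈ s, (0 : 𝕜) ^ (d i - k) * f i 0 = ∑ i ∈ s with d i = k, f i 0 := by
    rw [Finset.sum_filter]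
    refine Finset.sum_congr rfl fun i hi ↦ ?_
    have sub_eq_zero : d i - k = 0 ↔ d i = k := by have := hd i hi; omega
    simp only [zero_pow_eq, sub_eq_zero, ite_mul, one_mul, zero_mul]
  have reduced_tendsto : Tendsto (fun x ↦ ∑ i ∈ s, x ^ (d i - k) * f i x) (𝓝[≠] 0)
      (𝓝 (∑ i ∈ s, (0 : 𝕜) ^ (d i - k) * f i 0)) :=
    tendsto_finsetSum s fun i hi ↦
      (((continuous_pow _).continuousAt.mul (hf i hi)).tendsto).mono_left nhdsWithin_le_nhds
  rw [← value_at_zero]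
  refine reduced_tendsto.congr' ?_
  filter_upwards [self_mem_nhdsWithin] with x (hx : x ≠ 0)
  rw [Finset.sum_div]
  refine Finset.sum_congr rfl fun i hi ↦ ?_
  rw [pow_sub₀ x hx (hd i hi), div_eq_mul_inv, mul_right_comm]

section Paths

variable {V : Type*} {E : Finset (V × V)} {a b : V} {l l' : List (V × V)}

theorem PathIn.mem_of_mem (h : PathIn E a b l) {e : V × V} (he : e ∈ l) : e ∈ E := by
  induction h with
  | nil => simp at he
  | cons hab _ ih =>
    rcases List.mem_cons.1 he with rfl | he
    exacts [hab, ih he]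

theorem PathIn.reflTransGen_fst_of_mem (h : PathIn E a b l) {e : V × V} (he : e ∈ l) :
    ReflTransGen (fun x y ↦ (x, y) ∈ E) a e.1 := by
  induction h with
  | nil => simp at he
  | cons hab _ ih =>
    rcases List.mem_cons.1 he with rfl | he
    exacts [.refl, .head hab (ih he)]

theorem PathIn.pairwise_transGen_fst (h : PathIn E a b l) :
    l.Pairwise fun e f ↦ TransGen (fun x y ↦ (x, y) ∈ E) e.1 f.1 := by
  induction h with
  | nil => exact .nil
  | cons hab h ih =>
    exact .cons (fun f hf ↦ .head' hab (h.reflTransGen_fst_of_mem hf)) ih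

theorem exists_pathIn_ne_nil_of_transGen (h : TransGen (fun x y ↦ (x, y) ∈ E) a b) :
    ∃ l, PathIn E a b l ∧ l ≠ [] := by
  induction h using TransGen.head_induction_on with
  | single hab => exact ⟨_, .cons hab (.nil _), List.cons_ne_nil _ _⟩
  | head hac _ ih =>
    obtain ⟨l, hl, -⟩ := ih
    exact ⟨_, .cons hac hl, List.cons_ne_nil _ _⟩

theorem Acyclic.not_transGen_self (hE : Acyclic E) (a : V) :
    ¬ TransGen (fun x y ↦ (x, y) ∈ E) a a := fun h ↦
  have ⟨l, hl, hne⟩ := exists_pathIn_ne_nil_of_transGen h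
  hne (hE a l hl)

theorem PathIn.nodup (h : PathIn E a b l) (hE : Acyclic E) : l.Nodup :=
  h.pairwise_transGen_fst.imp fun {e f} (hef : TransGen _ e.1 f.1) (heq : e = f) ↦
    hE.not_transGen_self _ (heq ▸ hef)

theorem PathIn.eq_of_toFinset_eq [DecidableEq V] {a' b' : V} (h : PathIn E a b l)
    (h' : PathIn E a' b' l') (hE : Acyclic E) (heq : l.toFinset = l'.toFinset) : l = l' :=
  (List.perm_of_nodup_nodup_toFinset_eq (h.nodup hE) (h'.nodup hE) heq).eq_of_pairwise
    (fun _ _ _ _ hef hfe ↦ (hE.not_transGen_self _ (hef.trans hfe)).elim)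
    h.pairwise_transGen_fst h'.pairwise_transGen_fst

end Paths

section ActiveSets

variable {V : Type*} {E S : Finset (V × V)} {s t v : V} {l : List (V × V)}

/-- The event that some `s`–`t` path through `v` is active, encoded as the finite family of edge
sets `S ⊆ E` for which it occurs; `φ_v(p)` is the probability of this family. -/
noncomputable def activeSets (E : Finset (V × V)) (s t v : V) : Finset (Finset (V × V)) :=
  {S ∈ E.powerset | ActiveThrough E S s t v}

theorem mem_activeSets_iff_exists_toFinset_subset [DecidableEq V] :
    S ∈ activeSets E s t v ↔ S ⊆ E ∧ ∃ l, ThroughPath E s t v l ∧ l.toFinset ⊆ S := by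
  rw [activeSets, Finset.mem_filter, Finset.mem_powerset]
  simp only [ActiveThrough, Finset.subset_iff, List.mem_toFinset]

theorem intermediacy_eq_sum_activeSets [DecidableEq V] (E : Finset (V × V)) (p : ℝ) (s t v : V) :
    intermediacy E p s t v = ∑ S ∈ activeSets E s t v, p ^ #S * (1 - p) ^ (#E - #S) := by
  simp only [intermediacy, activeSets, Finset.sum_filter, mul_ite, mul_one, mul_zero]

theorem ThroughPath.shortestThrough_le_length (hl : ThroughPath E s t v l) :
    shortestThrough E s t v ≤ l.length :=
  Nat.sInf_le ⟨l, hl, rfl⟩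

theorem exists_throughPath_length_eq_shortestThrough (h : ∃ l, ThroughPath E s t v l) :
    ∃ l, ThroughPath E s t v l ∧ l.length = shortestThrough E s t v :=
  have ⟨l, hl⟩ := h
  Nat.sInf_mem (s := {n | ∃ l, ThroughPath E s t v l ∧ l.length = n}) ⟨l.length, l, hl, rfl⟩

theorem ThroughPath.card_toFinset [DecidableEq V] (hl : ThroughPath E s t v l) (hE : Acyclic E) :
    #l.toFinset = l.length :=
  List.toFinset_card_of_nodup (hl.1.nodup hE)

theorem ThroughPath.toFinset_mem_activeSets [DecidableEq V] (hl : ThroughPath E s t v l) :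
    l.toFinset ∈ activeSets E s t v :=
  mem_activeSets_iff_exists_toFinset_subset.2
    ⟨fun _ he ↦ hl.1.mem_of_mem (List.mem_toFinset.1 he), l, hl, subset_rfl⟩

theorem shortestThrough_le_card_of_mem_activeSets (hE : Acyclic E)
    (hS : S ∈ activeSets E s t v) : shortestThrough E s t v ≤ #S := by
  obtain ⟨-, l, hl, hlS⟩ := mem_activeSets_iff_exists_toFinset_subset.1 hS
  calc
    shortestThrough E s t v ≤ l.length := hl.shortestThrough_le_length
    _ = #l.toFinset := (hl.card_toFinset hE).symm
    _ ≤ #S := Finset.card_le_card hlS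

theorem bijOn_toFinset_shortest_throughPath [DecidableEq V] (hE : Acyclic E) (s t v : V) :
    Set.BijOn List.toFinset
      {l | ThroughPath E s t v l ∧ l.length = shortestThrough E s t v}
      {S ∈ activeSets E s t v | #S = shortestThrough E s t v} := by
  refine ⟨fun l ⟨hl, hlen⟩ ↦ ?_, fun l hl l' hl' heq ↦ ?_, fun S hS ↦ ?_⟩
  · exact ⟨hl.toFinset_mem_activeSets, (hl.card_toFinset hE).trans hlen⟩
  · exact hl.1.1.eq_of_toFinset_eq hl'.1.1 hE heq
  · obtain ⟨hS, hcard⟩ := hS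
    obtain ⟨-, l, hl, hlS⟩ := mem_activeSets_iff_exists_toFinset_subset.1 hS
    have card_le : #S ≤ #l.toFinset := by
      rw [hcard, hl.card_toFinset hE]
      exact hl.shortestThrough_le_length
    have toFinset_eq : l.toFinset = S := Finset.eq_of_subset_of_card_le hlS card_le
    exact ⟨l, ⟨hl, by rw [← hl.card_toFinset hE, toFinset_eq, hcard]⟩, toFinset_eq⟩

theorem finite_shortest_throughPath (hE : Acyclic E) (s t v : V) :
    {l | ThroughPath E s t v l ∧ l.length = shortestThrough E s t v}.Finite :=
  (bijOn_toFinset_shortest_throughPath hE s t v).finite_iff_finite.2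
    ((activeSets E s t v).finite_toSet.subset fun _ hS ↦ hS.1)

theorem ncard_shortest_throughPath (hE : Acyclic E) (s t v : V) :
    {l | ThroughPath E s t v l ∧ l.length = shortestThrough E s t v}.ncard =
      #{S ∈ activeSets E s t v | #S = shortestThrough E s t v} := by
  have bij := bijOn_toFinset_shortest_throughPath hE s t v
  rw [← bij.injOn.ncard_image, bij.image_eq, ← Set.ncard_coe_finset,
    Finset.coe_filter]

theorem tendsto_intermediacy_div_pow_shortestThrough [DecidableEq V] (hE : Acyclic E)
    (s t v : V) :
    Tendsto (fun p ↦ intermediacy E p s t v / p ^ shortestThrough E s t v) (𝓝[≠] 0)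
      (𝓝 #{S ∈ activeSets E s t v | #S = shortestThrough E s t v}) := by
  simp only [intermediacy_eq_sum_activeSets]
  simpa using tendsto_sum_pow_mul_div_pow_nhdsNE_zero (𝕜 := ℝ) (d := Finset.card)
    (f := fun S p ↦ (1 - p) ^ (#E - #S))
    (fun S (hS : S ∈ activeSets E s t v) ↦ shortestThrough_le_card_of_mem_activeSets hE hS)
    fun S _ ↦ by fun_prop

end ActiveSets

theorem intermediacy_asymptotics_at_zero_general {V : Type*} [DecidableEq V]
    (E : Finset (V × V)) (hacyc : Acyclic E) (s t v : V) (hv : ∃ l, ThroughPath E s t v l) :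
    0 < Set.ncard {l : List (V × V) |
        ThroughPath E s t v l ∧ l.length = shortestThrough E s t v} ∧
    Tendsto (fun p : ℝ ↦ intermediacy E p s t v / p ^ shortestThrough E s t v) (𝓝[>] 0)
      (𝓝 (Set.ncard {l : List (V × V) |
        ThroughPath E s t v l ∧ l.length = shortestThrough E s t v} : ℝ)) := by
  refine ⟨(Set.ncard_pos (finite_shortest_throughPath hacyc s t v)).2
    (exists_throughPath_length_eq_shortestThrough hv), ?_⟩
  rw [ncard_shortest_throughPath hacyc]
  exact (tendsto_intermediacy_div_pow_shortestThrough hacyc s t v).mono_left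
    (nhdsGT_le_nhdsNE 0)

/-- If every node lies on a directed `s`–`t` path, then
`φ_v(p) / p^{ℓ_v}` tends, as `p → 0⁺`, to the number of directed `s`–`t` paths
through `v` of length `ℓ_v`, and this number is positive. -/
theorem intermediacy_asymptotics_at_zero {V : Type*} [Fintype V] [DecidableEq V]
    (E : Finset (V × V)) (hacyc : Acyclic E) (s t : V)
    (hall : ∀ x : V, ∃ l, ThroughPath E s t x l) (v : V) :
    0 < Set.ncard {l : List (V × V) |
        ThroughPath E s t v l ∧ l.length = shortestThrough E s t v} ∧
    Filter.Tendsto (fun p : ℝ => intermediacy E p s t v / p ^ shortestThrough E s t v)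
      (nhdsWithin 0 (Set.Ioi 0))
      (nhds ((Set.ncard {l : List (V × V) |
        ThroughPath E s t v l ∧ l.length = shortestThrough E s t v} : ℕ) : ℝ)) :=
  intermediacy_asymptotics_at_zero_general E hacyc s t v (hall v)
end

section
/- Let G = (V,E) be a finite directed acyclic graph with source s and target t in which every node lies on at least one directed s–t path, and let u, v ∈ V with σ_u > σ_v. Then the ratio (1 − φ_u(p))/(1 − φ_v(p)) tends to 0 as p tends to 1 from below. -/
open scoped Classical

open Function
open scoped Finset

/-!
Let `c` be the least number of edges whose removal destroys all `s`–`t` paths through `v`. An edge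
set in which no such path is active misses at least `c` edges, and some such set misses exactly `c`,
so `1 - φ_v(p)` is of exact order `(1 - p) ^ c` as `p → 1⁻`. It remains to see that `c = σ_v`.
Disjoint paths through `v` all lose an edge, so `σ_v ≤ c`. Conversely, Menger's theorem gives `c`
disjoint walks from `s` to `v` and `c` disjoint walks from `v` to `t`; by acyclicity a walk into `v`
shares no edge with a walk out of `v`, so concatenating them gives `c ≤ σ_v`.
-/

section Walks

variable {V : Type*} {E F : Finset (V × V)} {a b c s t v : V} {l m : List (V × V)}

theorem PathIn.mem (h : PathIn F a b l) : ∀ e ∈ l, e ∈ F := by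
  induction h with
  | nil => simp
  | cons hab _ ih => exact List.forall_mem_cons.2 ⟨hab, ih⟩

theorem PathIn.of_forall_mem (h : PathIn E a b l) (hF : ∀ e ∈ l, e ∈ F) : PathIn F a b l := by
  induction h with
  | nil => exact .nil _
  | cons _ _ ih =>
    obtain ⟨hab, hl⟩ := List.forall_mem_cons.1 hF
    exact .cons hab (ih hl)

theorem PathIn.mono (hEF : E ⊆ F) (h : PathIn E a b l) : PathIn F a b l :=
  h.of_forall_mem fun e he => hEF (h.mem e he)

theorem PathIn.append (hl : PathIn F a b l) (hm : PathIn F b c m) : PathIn F a c (l ++ m) := by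
  induction hl with
  | nil => exact hm
  | cons hab _ ih => exact .cons hab (ih hm)

theorem PathIn.ne_nil (h : PathIn F a b l) (hab : a ≠ b) : l ≠ [] := by
  rintro rfl
  cases h
  exact hab rfl

theorem PathIn.eq_or_mem_map_snd (h : PathIn F a b l) : b = a ∨ b ∈ l.map Prod.snd := by
  induction h with
  | nil => exact .inl rfl
  | cons _ _ ih =>
    right
    simpa using ih

theorem ThroughPath.exists_append (h : ThroughPath F s t v l) :
    ∃ l₁ l₂, l = l₁ ++ l₂ ∧ PathIn F s v l₁ ∧ PathIn F v t l₂ := by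
  obtain ⟨hl, hv⟩ := h
  induction hl with
  | nil =>
    obtain rfl : v = _ := by simpa using hv
    exact ⟨[], [], rfl, .nil _, .nil _⟩
  | cons hab hl ih =>
    rcases hv with rfl | hv
    · exact ⟨[], _, rfl, .nil _, .cons hab hl⟩
    · obtain ⟨l₁, l₂, rfl, h₁, h₂⟩ := ih (by simpa using hv)
      exact ⟨_ :: l₁, l₂, rfl, .cons hab h₁, h₂⟩

theorem PathIn.throughPath_append (hl : PathIn F s v l) (hm : PathIn F v t m) :
    ThroughPath F s t v (l ++ m) := by
  refine ⟨hl.append hm, hl.eq_or_mem_map_snd.imp_right fun hv => ?_⟩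
  exact List.map_append ▸ List.mem_append_left _ hv

theorem PathIn.reaches_of_mem {e : V × V} (h : PathIn F a b l) (he : e ∈ l) :
    Reaches F a e.1 ∧ Reaches F e.2 b := by
  induction h with
  | nil => simp at he
  | cons hab hl ih =>
    rcases List.mem_cons.1 he with rfl | he
    · exact ⟨⟨[], .nil _⟩, ⟨_, hl⟩⟩
    · obtain ⟨⟨m, hm⟩, hb⟩ := ih he
      exact ⟨⟨_, .cons hab hm⟩, hb⟩

theorem Acyclic.disjoint (hF : Acyclic F) (hl : PathIn F a b l) (hm : PathIn F b c m) :
    l.Disjoint m := by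
  rintro ⟨x, y⟩ hel hem
  obtain ⟨_, l', hl'⟩ := hl.reaches_of_mem hel
  obtain ⟨⟨m', hm'⟩, _⟩ := hm.reaches_of_mem hem
  exact List.cons_ne_nil _ _ (hF x _ (.cons (hl.mem _ hel) (hl'.append hm')))

theorem ActiveThrough.reaches (h : ActiveThrough E F s t v) : Reaches F s v ∧ Reaches F v t := by
  obtain ⟨l, hl, hlF⟩ := h
  obtain ⟨l₁, l₂, rfl, h₁, h₂⟩ := hl.exists_append
  obtain ⟨hF₁, hF₂⟩ := List.forall_mem_append.1 hlF
  exact ⟨⟨l₁, h₁.of_forall_mem hF₁⟩, ⟨l₂, h₂.of_forall_mem hF₂⟩⟩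

end Walks

section Cuts

variable {V : Type*}

/-- The set of edges of `F` that leave the vertex set `R`. -/
noncomputable def cutEdges (F : Finset (V × V)) (R : Set V) : Finset (V × V) :=
  {e ∈ F | e.1 ∈ R ∧ e.2 ∉ R}

/-- Every vertex set that contains `a` but not `b` is left by at least `k` edges of `F`. -/
def IsEdgeConnected (F : Finset (V × V)) (a b : V) (k : ℕ) : Prop :=
  ∀ R : Set V, a ∈ R → b ∉ R → k ≤ #(cutEdges F R)

/-- The tight cuts between `a` and `b`: vertex sets that contain `a` but not `b` and that are left
by at most `k` edges of `F`. Under `IsEdgeConnected F a b k` this number is then exactly `k`. -/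
def tightCuts (F : Finset (V × V)) (a b : V) (k : ℕ) : Set (Set V) :=
  {R | a ∈ R ∧ b ∉ R ∧ #(cutEdges F R) ≤ k}

variable {F : Finset (V × V)} {a b : V} {R T : Set V} {k : ℕ}

@[simp]
theorem mem_cutEdges {e : V × V} : e ∈ cutEdges F R ↔ e ∈ F ∧ e.1 ∈ R ∧ e.2 ∉ R :=
  Finset.mem_filter

theorem PathIn.exists_mem_cutEdges {l : List (V × V)} (h : PathIn F a b l) (ha : a ∈ R)
    (hb : b ∉ R) : ∃ e ∈ l, e ∈ cutEdges F R := by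
  induction h with
  | nil => exact absurd ha hb
  | @cons x y _ _ hxy _ ih =>
    by_cases hy : y ∈ R
    · obtain ⟨e, hel, he⟩ := ih hy hb
      exact ⟨e, List.mem_cons_of_mem _ hel, he⟩
    · exact ⟨(x, y), List.mem_cons_self, mem_cutEdges.2 ⟨hxy, ha, hy⟩⟩

theorem card_cutEdges_union_add_card_cutEdges_inter_le (F : Finset (V × V)) (R T : Set V) :
    #(cutEdges F (R ∪ T)) + #(cutEdges F (R ∩ T)) ≤ #(cutEdges F R) + #(cutEdges F T) := by
  have hunion : cutEdges F (R ∪ T) ∪ cutEdges F (R ∩ T) ⊆ cutEdges F R ∪ cutEdges F T := by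
    intro e
    simp only [Finset.mem_union, mem_cutEdges, Set.mem_union, Set.mem_inter_iff]
    tauto
  have hinter : cutEdges F (R ∪ T) ∩ cutEdges F (R ∩ T) ⊆ cutEdges F R ∩ cutEdges F T := by
    intro e
    simp only [Finset.mem_inter, mem_cutEdges, Set.mem_union, Set.mem_inter_iff]
    tauto
  rw [← Finset.card_union_add_card_inter, ← Finset.card_union_add_card_inter (cutEdges F R)]
  exact add_le_add (Finset.card_le_card hunion) (Finset.card_le_card hinter)

theorem IsEdgeConnected.supClosed_tightCuts (h : IsEdgeConnected F a b k) :
    SupClosed (tightCuts F a b k) := by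
  rintro R ⟨haR, hbR, hR⟩ T ⟨haT, hbT, hT⟩
  have hinter : k ≤ #(cutEdges F (R ∩ T)) := h _ ⟨haR, haT⟩ fun hb => hbR hb.1
  have hsub := card_cutEdges_union_add_card_cutEdges_inter_le F R T
  exact ⟨.inl haR, not_or.2 ⟨hbR, hbT⟩, show #(cutEdges F (R ∪ T)) ≤ k by omega⟩

theorem exists_mem_tightCuts_of_minimal (h : Minimal (IsEdgeConnected · a b k) F) {e : V × V}
    (he : e ∈ F) : ∃ R ∈ tightCuts F a b k, e ∈ cutEdges F R := by
  have herase := h.not_prop_of_lt (Finset.erase_ssubset he)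
  simp only [IsEdgeConnected, not_forall, not_le] at herase
  obtain ⟨R, ha, hb, hlt⟩ := herase
  have hk : k ≤ #(cutEdges F R) := h.prop R ha hb
  have hcut : cutEdges (F.erase e) R = (cutEdges F R).erase e := by
    ext; simp [and_assoc]
  rw [hcut] at hlt
  have heR : e ∈ cutEdges F R := by
    by_contra heR
    rw [Finset.erase_eq_of_notMem heR] at hlt
    omega
  rw [Finset.card_erase_of_mem heR] at hlt
  exact ⟨R, ⟨ha, hb, by omega⟩, heR⟩

theorem exists_mem_tightCuts_forall_mem_of_minimal
    (h : Minimal (IsEdgeConnected · a b k) F) {x : V} (hx : ∃ e ∈ F, e.2 = x) :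
    ∃ U ∈ tightCuts F a b k, x ∉ U ∧ ∀ e ∈ F, e.2 = x → e.1 ∈ U := by
  choose! R hR hcut using fun e (he : e ∈ F) => exists_mem_tightCuts_of_minimal h he
  let I : Finset (V × V) := {e ∈ F | e.2 = x}
  have hI : ∀ e ∈ I, e ∈ F ∧ e.2 = x := fun e he => Finset.mem_filter.1 he
  have hne : I.Nonempty := hx.imp fun _ => Finset.mem_filter.2
  have htight : I.sup R ∈ tightCuts F a b k :=
    h.prop.supClosed_tightCuts.finsetSup_mem hne fun e he => hR e (hI e he).1
  refine ⟨I.sup R, htight, ?_, ?_⟩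
  · rw [Finset.sup_set_eq_biUnion, Set.mem_iUnion₂]
    rintro ⟨e, he, hxR⟩
    obtain ⟨heF, rfl⟩ := hI e he
    exact (mem_cutEdges.1 (hcut e heF)).2.2 hxR
  · intro e he hex
    exact Finset.le_sup (f := R) (Finset.mem_filter.2 ⟨he, hex⟩) (mem_cutEdges.1 (hcut e he)).2.1

end Cuts

section Excess

variable {V : Type*} [DecidableEq V] {F : Finset (V × V)} {a b : V} {k : ℕ}

/-- The out-degree minus the in-degree of `x` in the graph with edge set `F`. -/
def excess (F : Finset (V × V)) (x : V) : ℤ :=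
  ∑ e ∈ F, ((if e.1 = x then 1 else 0) - (if e.2 = x then 1 else 0))

theorem excess_erase {e : V × V} (he : e ∈ F) :
    excess (F.erase e) = excess F - Pi.single e.1 1 + Pi.single e.2 1 := by
  ext x
  simp only [excess, Pi.add_apply, Pi.sub_apply, Pi.single_apply, ← Finset.add_sum_erase F _ he,
    eq_comm (a := x)]
  ring

theorem exists_mem_of_excess_pos (h : 0 < excess F a) : ∃ y, (a, y) ∈ F := by
  have hsum : ∑ _e ∈ F, (0 : ℤ) < excess F a := by rwa [Finset.sum_const_zero]
  obtain ⟨⟨x, y⟩, he, hpos⟩ := Finset.exists_lt_of_sum_lt hsum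
  obtain rfl : x = a := by
    by_contra hx
    simp only [hx, if_false] at hpos
    split_ifs at hpos <;> omega
  exact ⟨y, he⟩

theorem card_cutEdges_insert_le {x : V} {U : Set V} (hx : x ∉ U)
    (hU : ∀ e ∈ F, e.2 = x → e.1 ∈ U) :
    (#(cutEdges F (insert x U)) : ℤ) ≤ #(cutEdges F U) + excess F x := by
  simp only [cutEdges, Finset.card_filter, Nat.cast_sum, excess, ← Finset.sum_add_distrib]
  refine Finset.sum_le_sum fun e he => ?_
  have := hU e he
  by_cases h₁ : e.1 = x <;> by_cases h₂ : e.2 = x <;> by_cases h₃ : e.1 ∈ U <;>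
    by_cases h₄ : e.2 ∈ U <;> simp_all

/-- In an edge-minimal graph every edge crosses a tight cut, so the union `U` of the tight cuts
crossed by the edges entering `x` is tight as well. Since adding `x` to `U` cannot push its size
below `k`, at least as many edges leave `x` as enter it. -/
theorem single_le_excess_of_minimal (h : Minimal (IsEdgeConnected · a b k) F) {x : V}
    (hxb : x ≠ b) : (Pi.single a (k : ℤ) : V → ℤ) x ≤ excess F x := by
  by_cases hin : ∃ e ∈ F, e.2 = x
  · obtain ⟨U, ⟨haU, hbU, hUk⟩, hxU, hU⟩ := exists_mem_tightCuts_forall_mem_of_minimal h hin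
    have hk : k ≤ #(cutEdges F (insert x U)) :=
      h.prop _ (.inr haU) (not_or.2 ⟨hxb.symm, hbU⟩)
    have hinsert := card_cutEdges_insert_le hxU hU
    rw [Pi.single_eq_of_ne (ne_of_mem_of_not_mem haU hxU).symm]
    omega
  · have hcut : (#(cutEdges F {x}) : ℤ) ≤ excess F x := by
      simpa [cutEdges] using
        card_cutEdges_insert_le (U := ∅) (Set.notMem_empty x) fun e he hex => hin ⟨e, he, hex⟩
    rcases eq_or_ne x a with rfl | hxa
    · have hk : k ≤ #(cutEdges F {x}) := h.prop {x} rfl hxb.symm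
      rw [Pi.single_eq_same]
      omega
    · rw [Pi.single_eq_of_ne hxa]
      omega

/-- A walk from `a` that deletes the edges it uses can only get stuck at `b`: the hypothesis says
that its current endpoint has an outgoing edge, and every step preserves it. -/
theorem exists_pathIn_excess_sdiff (h : ∀ x ≠ b, (Pi.single a 1 : V → ℤ) x ≤ excess F x) :
    ∃ l, PathIn F a b l ∧
      excess (F \ l.toFinset) = excess F - Pi.single a 1 + Pi.single b 1 := by
  induction F using Finset.strongInduction generalizing a with
  | H F ih =>
    rcases eq_or_ne a b with rfl | hab
    · exact ⟨[], .nil _, by simp⟩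
    obtain ⟨y, hy⟩ : ∃ y, (a, y) ∈ F := exists_mem_of_excess_pos <|
      Int.add_one_le_iff.1 <| by simpa using h a hab
    have herase := excess_erase hy
    obtain ⟨l, hl, hexcess⟩ := ih _ (Finset.erase_ssubset hy) (a := y) fun x hx => by
      simpa [herase] using h x hx
    refine ⟨(a, y) :: l, .cons hy (hl.mono (Finset.erase_subset _ _)), ?_⟩
    rw [List.toFinset_cons, Finset.sdiff_insert, ← Finset.erase_sdiff_comm, hexcess, herase]
    abel

end Excess

section Menger

variable {V : Type*} {E F : Finset (V × V)} {a b : V} {k : ℕ}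

/-- There are `k` pairwise edge-disjoint walks from `a` to `b` in `F`, given as an indexed family
so that the empty walk may be repeated when `a = b`. -/
def HasDisjointPaths (F : Finset (V × V)) (a b : V) (k : ℕ) : Prop :=
  ∃ f : Fin k → List (V × V), (∀ i, PathIn F a b (f i)) ∧ Pairwise (List.Disjoint on f)

theorem HasDisjointPaths.mono (hEF : E ⊆ F)
    (h : HasDisjointPaths E a b k) : HasDisjointPaths F a b k :=
  let ⟨f, hf, hdisj⟩ := h
  ⟨f, fun i => (hf i).mono hEF, hdisj⟩

theorem HasDisjointPaths.cons [DecidableEq V] {l : List (V × V)} (hl : PathIn F a b l)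
    (h : HasDisjointPaths (F \ l.toFinset) a b k) : HasDisjointPaths F a b (k + 1) := by
  obtain ⟨f, hf, hdisj⟩ := h
  have hfl : ∀ i, (f i).Disjoint l := fun i e he hel => by
    simpa [hel] using (hf i).mem e he
  refine ⟨Fin.cons l f, Fin.cases hl fun i => (hf i).mono Finset.sdiff_subset, ?_⟩
  intro i j hij
  cases i using Fin.cases <;> cases j using Fin.cases
  · exact absurd rfl hij
  · exact (hfl _).symm
  · exact hfl _
  · exact hdisj (by simpa using hij)

theorem hasDisjointPaths_of_single_le_excess [DecidableEq V]
    (h : ∀ x ≠ b, (Pi.single a (k : ℤ) : V → ℤ) x ≤ excess F x) :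
    HasDisjointPaths F a b k := by
  induction k generalizing F with
  | zero => exact ⟨Fin.elim0, fun i => i.elim0, fun i => i.elim0⟩
  | succ k ih =>
    have hsucc : ∀ x ≠ b,
        (Pi.single a (k : ℤ) : V → ℤ) x + (Pi.single a 1 : V → ℤ) x ≤ excess F x := by
      simpa only [Nat.cast_succ, Pi.single_add, Pi.add_apply] using h
    have hnonneg : (0 : V → ℤ) ≤ Pi.single a (k : ℤ) := Pi.single_nonneg.2 k.cast_nonneg
    obtain ⟨l, hl, hexcess⟩ := exists_pathIn_excess_sdiff fun x hx =>
      (le_add_of_nonneg_left (hnonneg x)).trans (hsucc x hx)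
    refine .cons hl (ih fun x hx => ?_)
    simpa [hexcess, hx] using le_sub_iff_add_le.2 (hsucc x hx)

theorem IsEdgeConnected.hasDisjointPaths (h : IsEdgeConnected F a b k) :
    HasDisjointPaths F a b k := by
  obtain ⟨F', hF', hmin⟩ := exists_minimal_le_of_wellFoundedLT (IsEdgeConnected · a b k) F h
  exact (hasDisjointPaths_of_single_le_excess fun x => single_le_excess_of_minimal hmin).mono hF'

theorem exists_not_reaches_of_not_hasDisjointPaths [DecidableEq V]
    (h : ¬ HasDisjointPaths F a b k) :
    ∃ S ⊆ F, ¬ Reaches S a b ∧ #(F \ S) < k := by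
  obtain ⟨R, ha, hb, hlt⟩ : ∃ R : Set V, a ∈ R ∧ b ∉ R ∧ #(cutEdges F R) < k := by
    simpa [IsEdgeConnected] using mt IsEdgeConnected.hasDisjointPaths h
  refine ⟨F \ cutEdges F R, Finset.sdiff_subset, ?_, ?_⟩
  · rintro ⟨l, hl⟩
    obtain ⟨e, -, he⟩ := hl.exists_mem_cutEdges ha hb
    obtain ⟨heS, heR⟩ := mem_cutEdges.1 he
    obtain ⟨heF, hcut⟩ := Finset.mem_sdiff.1 heS
    exact hcut (mem_cutEdges.2 ⟨heF, heR⟩)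
  · have hsub : cutEdges F R ⊆ F := Finset.filter_subset _ _
    rwa [Finset.sdiff_sdiff_eq_self hsub]

end Menger

section MaxDisjointThrough

variable {V : Type*} {E S : Finset (V × V)} {s t v : V} {k : ℕ}

theorem card_le_card_sdiff_of_not_activeThrough [DecidableEq V] (h : ¬ ActiveThrough E S s t v)
    {P : Finset (List (V × V))} (hP : ∀ l ∈ P, ThroughPath E s t v l)
    (hdisj : ∀ l₁ ∈ P, ∀ l₂ ∈ P, l₁ ≠ l₂ → ∀ e, e ∈ l₁ → e ∉ l₂) : #P ≤ #(E \ S) := by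
  refine Finset.card_le_card_of_forall_subsingleton (fun l e => e ∈ l) (fun l hl => ?_) ?_
  · obtain ⟨e, hel, heS⟩ : ∃ e ∈ l, e ∉ S := by
      by_contra! hlS
      exact h ⟨l, hP l hl, hlS⟩
    exact ⟨e, Finset.mem_sdiff.2 ⟨(hP l hl).1.mem e hel, heS⟩, hel⟩
  · rintro e - l₁ ⟨hl₁, he₁⟩ l₂ ⟨hl₂, he₂⟩
    by_contra hne
    exact hdisj l₁ hl₁ l₂ hl₂ hne e he₁ he₂

theorem maxDisjointThrough_le_card_sdiff [DecidableEq V] (h : ¬ ActiveThrough E S s t v) :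
    maxDisjointThrough E s t v ≤ #(E \ S) := by
  refine csSup_le' ?_
  rintro _ ⟨P, rfl, hP, hdisj⟩
  exact card_le_card_sdiff_of_not_activeThrough h hP hdisj

theorem le_maxDisjointThrough (hst : s ≠ t) (f : Fin k → List (V × V))
    (hf : ∀ i, ThroughPath E s t v (f i)) (hdisj : Pairwise (List.Disjoint on f)) :
    k ≤ maxDisjointThrough E s t v := by
  have hempty : ¬ ActiveThrough E ∅ s t v := by
    rintro ⟨l, hl, hnil⟩
    exact hl.1.ne_nil hst (List.eq_nil_iff_forall_not_mem.2 (by simpa using hnil))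
  have hinj : Injective f := by
    refine injective_iff_pairwise_ne.2 fun i j hij heq => ?_
    obtain ⟨e, he⟩ := List.exists_mem_of_ne_nil _ ((hf i).1.ne_nil hst)
    exact hdisj hij he (heq ▸ he)
  refine le_csSup ⟨#(E \ ∅), ?_⟩ ⟨Finset.univ.map ⟨f, hinj⟩, by simp, by simpa using hf, ?_⟩
  · rintro _ ⟨P, rfl, hP, hPdisj⟩
    exact card_le_card_sdiff_of_not_activeThrough hempty hP hPdisj
  · simp only [Finset.forall_mem_map]
    intro i _ j _ hij
    exact hdisj (ne_of_apply_ne f hij)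

theorem le_maxDisjointThrough_of_hasDisjointPaths (hE : Acyclic E) (hst : s ≠ t)
    (hsv : HasDisjointPaths E s v k) (hvt : HasDisjointPaths E v t k) :
    k ≤ maxDisjointThrough E s t v := by
  obtain ⟨f, hf, hfdisj⟩ := hsv
  obtain ⟨g, hg, hgdisj⟩ := hvt
  refine le_maxDisjointThrough hst (fun i => f i ++ g i)
    (fun i => (hf i).throughPath_append (hg i)) fun i j hij => ?_
  exact List.disjoint_append_left.2
    ⟨List.disjoint_append_right.2 ⟨hfdisj hij, hE.disjoint (hf i) (hg j)⟩,
      List.disjoint_append_right.2 ⟨(hE.disjoint (hf j) (hg i)).symm, hgdisj hij⟩⟩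

theorem exists_not_activeThrough_card_sdiff_le [DecidableEq V] (hE : Acyclic E) (hst : s ≠ t)
    (v : V) : ∃ S ⊆ E, ¬ ActiveThrough E S s t v ∧ #(E \ S) ≤ maxDisjointThrough E s t v := by
  suffices ∃ S ⊆ E, (¬ Reaches S s v ∨ ¬ Reaches S v t) ∧
      #(E \ S) < maxDisjointThrough E s t v + 1 by
    obtain ⟨S, hS, hreach, hcard⟩ := this
    exact ⟨S, hS, fun h => hreach.elim (· h.reaches.1) (· h.reaches.2), Nat.le_of_lt_succ hcard⟩
  by_cases hsv : HasDisjointPaths E s v (maxDisjointThrough E s t v + 1)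
  · have hvt : ¬ HasDisjointPaths E v t (maxDisjointThrough E s t v + 1) := fun hvt =>
      Nat.not_succ_le_self _ (le_maxDisjointThrough_of_hasDisjointPaths hE hst hsv hvt)
    obtain ⟨S, hS, hreach, hcard⟩ := exists_not_reaches_of_not_hasDisjointPaths hvt
    exact ⟨S, hS, .inr hreach, hcard⟩
  · obtain ⟨S, hS, hreach, hcard⟩ := exists_not_reaches_of_not_hasDisjointPaths hsv
    exact ⟨S, hS, .inl hreach, hcard⟩

end MaxDisjointThrough

section Asymptotics

open Asymptotics Filter
open scoped Topology

variable {V : Type*} [DecidableEq V] {E S : Finset (V × V)} {s t v : V}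

theorem isBigO_pow_pow_nhds_zero {𝕜 : Type*} [NormedField 𝕜] {m n : ℕ} (h : m ≤ n) :
    (fun x : 𝕜 => x ^ n) =O[𝓝 0] fun x => x ^ m := by
  rcases h.eq_or_lt with rfl | h
  · exact isBigO_refl _ _
  · exact (isLittleO_pow_pow h).isBigO

theorem tendsto_one_sub_nhdsLT_one :
    Tendsto (fun p : ℝ => 1 - p) (𝓝[<] 1) (𝓝 0) := by
  have : Tendsto (fun p : ℝ => 1 - p) (𝓝 1) (𝓝 (1 - 1)) := tendsto_const_nhds.sub tendsto_id
  rw [sub_self] at this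
  exact this.mono_left nhdsWithin_le_nhds

theorem one_sub_intermediacy_eq_sum (E : Finset (V × V)) (p : ℝ) (s t v : V) :
    1 - intermediacy E p s t v =
      ∑ S ∈ E.powerset with ¬ ActiveThrough E S s t v, p ^ #S * (1 - p) ^ #(E \ S) := by
  have htotal : ∑ S ∈ E.powerset, p ^ #S * (1 - p) ^ (#E - #S) = 1 := by
    simp [Finset.sum_pow_mul_eq_add_pow]
  rw [← htotal, intermediacy, ← Finset.sum_sub_distrib, Finset.sum_filter]
  refine Finset.sum_congr rfl fun S hS => ?_
  rw [Finset.card_sdiff_of_subset (Finset.mem_powerset.1 hS)]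
  split_ifs <;> simp_all

theorem pow_mul_pow_le_one_sub_intermediacy {p : ℝ} (hp₀ : 0 ≤ p) (hp₁ : p ≤ 1) (hS : S ⊆ E)
    (h : ¬ ActiveThrough E S s t v) :
    p ^ #S * (1 - p) ^ #(E \ S) ≤ 1 - intermediacy E p s t v := by
  rw [one_sub_intermediacy_eq_sum]
  have hq : 0 ≤ 1 - p := sub_nonneg.2 hp₁
  exact Finset.single_le_sum (f := fun S => p ^ #S * (1 - p) ^ #(E \ S))
    (fun _ _ => mul_nonneg (pow_nonneg hp₀ _) (pow_nonneg hq _))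
    (Finset.mem_filter.2 ⟨Finset.mem_powerset.2 hS, h⟩)

theorem isBigO_one_sub_intermediacy (E : Finset (V × V)) (s t v : V) :
    (fun p : ℝ => 1 - intermediacy E p s t v) =O[𝓝[<] 1]
      fun p => (1 - p) ^ maxDisjointThrough E s t v := by
  simp only [one_sub_intermediacy_eq_sum]
  refine IsBigO.fun_sum fun S hS => ?_
  have hp : (fun p : ℝ => p ^ #S) =O[𝓝[<] 1] fun _ => (1 : ℝ) :=
    ((continuous_pow #S).continuousAt.mono_left nhdsWithin_le_nhds).isBigO_one ℝ
  have hq : (fun p : ℝ => (1 - p) ^ #(E \ S)) =O[𝓝[<] 1]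
      fun p => (1 - p) ^ maxDisjointThrough E s t v :=
    (isBigO_pow_pow_nhds_zero (maxDisjointThrough_le_card_sdiff
      (Finset.mem_filter.1 hS).2)).comp_tendsto tendsto_one_sub_nhdsLT_one
  simpa only [one_mul] using hp.mul hq

theorem isBigO_pow_maxDisjointThrough (hE : Acyclic E) (hst : s ≠ t) (v : V) :
    (fun p : ℝ => (1 - p) ^ maxDisjointThrough E s t v) =O[𝓝[<] 1]
      fun p => 1 - intermediacy E p s t v := by
  obtain ⟨S, hS, hactive, hcard⟩ := exists_not_activeThrough_card_sdiff_le hE hst v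
  have hp : (fun _ => (1 : ℝ)) =O[𝓝[<] 1] fun p : ℝ => p ^ #S := by
    refine ((isEquivalent_const_iff_tendsto one_ne_zero).2 ?_).isBigO_symm
    simpa using (continuous_pow #S).continuousAt.mono_left (nhdsWithin_le_nhds (a := (1 : ℝ)))
  have hq : (fun p : ℝ => (1 - p) ^ maxDisjointThrough E s t v) =O[𝓝[<] 1]
      fun p => (1 - p) ^ #(E \ S) :=
    (isBigO_pow_pow_nhds_zero hcard).comp_tendsto tendsto_one_sub_nhdsLT_one
  have hle : (fun p : ℝ => p ^ #S * (1 - p) ^ #(E \ S)) =O[𝓝[<] 1]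
      fun p => 1 - intermediacy E p s t v := by
    refine .of_norm_eventuallyLE ?_
    filter_upwards [Ioo_mem_nhdsLT one_pos] with p hp
    have hp' : 0 < 1 - p := sub_pos.2 hp.2
    have hp₀ : 0 < p := hp.1
    rw [Real.norm_of_nonneg (by positivity)]
    exact pow_mul_pow_le_one_sub_intermediacy hp₀.le hp.2.le hS hactive
  have hpq := hp.mul hq
  simp only [one_mul] at hpq
  exact hpq.trans hle

theorem intermediacy_eq_one_of_throughPath_nil (h : ThroughPath E s t v []) (p : ℝ) :
    intermediacy E p s t v = 1 := by
  have hactive : ∀ S, ActiveThrough E S s t v := fun S => ⟨[], h, by simp⟩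
  have := one_sub_intermediacy_eq_sum E p s t v
  simp only [hactive, not_true_eq_false, Finset.filter_false, Finset.sum_empty] at this
  linarith

theorem intermediacy_complement_ratio_tendsto_zero_general
    (hacyc : Acyclic E) {u : V}
    (hsigma : maxDisjointThrough E s t v < maxDisjointThrough E s t u) :
    Tendsto (fun p : ℝ => (1 - intermediacy E p s t u) / (1 - intermediacy E p s t v))
      (𝓝[<] 1) (𝓝 0) := by
  rcases eq_or_ne s t with rfl | hst
  · obtain ⟨l, hl, -⟩ : ActiveThrough E E s s u := by
      by_contra h
      have : maxDisjointThrough E s s u ≤ 0 := by simpa using maxDisjointThrough_le_card_sdiff h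
      omega
    obtain rfl := hacyc s l hl.1
    simp [intermediacy_eq_one_of_throughPath_nil hl]
  · have hlittle : (fun p : ℝ => (1 - p) ^ maxDisjointThrough E s t u) =o[𝓝[<] 1]
        fun p => (1 - p) ^ maxDisjointThrough E s t v :=
      (isLittleO_pow_pow hsigma).comp_tendsto tendsto_one_sub_nhdsLT_one
    exact (((isBigO_one_sub_intermediacy E s t u).trans_isLittleO hlittle).trans_isBigO
      (isBigO_pow_maxDisjointThrough hacyc hst v)).tendsto_div_nhds_zero

end Asymptotics

/-- If every node lies on a directed `s`–`t` path and `σ_u > σ_v`, then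
`(1 − φ_u(p)) / (1 − φ_v(p)) → 0` as `p → 1⁻`. -/
theorem intermediacy_complement_ratio_tendsto_zero {V : Type*} [Fintype V] [DecidableEq V]
    (E : Finset (V × V)) (hacyc : Acyclic E) (s t : V)
    (hall : ∀ x : V, ∃ l, ThroughPath E s t x l) (u v : V)
    (hsigma : maxDisjointThrough E s t v < maxDisjointThrough E s t u) :
    Filter.Tendsto
      (fun p : ℝ => (1 - intermediacy E p s t u) / (1 - intermediacy E p s t v))
      (nhdsWithin 1 (Set.Iio 1)) (nhds 0) :=
  intermediacy_complement_ratio_tendsto_zero_general hacyc hsigma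
end
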